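/- Let k : (0, ∞) → ℝ be twice continuously differentiable with k''(δ) ≥ 0 for all δ > 0, lim_{δ→∞} k(δ) = 0, lim_{δ→∞} δ·k'(δ) = 0, and suppose ∫_0^∞ δ·k''(δ) dδ = 1, so that p(δ) = δ·k''(δ) is a probability density on (0, ∞). Then for all x₁, x₂ ∈ ℝ with x₁ ≠ x₂, ∫_0^∞ p(δ) · (1/δ) · Leb{u ∈ [0, δ] : ⌊(x₁ − u)/δ⌋ = ⌊(x₂ − u)/δ⌋} dδ = k(|x₁ − x₂|), where Leb denotes Lebesgue measure. That is, drawing the width δ from p and then the bias u uniformly from [0, δ], the probability that x₁ and x₂ fall in the same bin equals k(|x₁ − x₂|). -/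

import Mathlib

open MeasureTheory Filter in
lemma vol_aux (x₁ x₂ δ : ℝ) (hδ : 0 < δ) (h : x₁ ≤ x₂) :
    (volume {u : ℝ | u ∈ Set.Icc 0 δ ∧ ⌊(x₁ - u) / δ⌋ = ⌊(x₂ - u) / δ⌋}).toReal
      = max (δ - (x₂ - x₁)) 0 := by
  set A : Set ℝ := {u : ℝ | ⌊(x₁ - u) / δ⌋ = ⌊(x₂ - u) / δ⌋} with hA
  have hAm : MeasurableSet A := by
    apply measurableSet_eq_fun <;> fun_prop
  have hinv : ∀ g : AddSubgroup.zmultiples δ, (fun x : ℝ => g +ᵥ x) ⁻¹' A = A := by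
    rintro ⟨g, hg⟩
    obtain ⟨n, rfl⟩ := AddSubgroup.mem_zmultiples_iff.1 hg
    ext u
    have key : ∀ x : ℝ, ⌊(x - (n • δ + u)) / δ⌋ = ⌊(x - u) / δ⌋ - n := by
      intro x
      rw [← Int.floor_sub_intCast]
      congr 1
      simp only [zsmul_eq_mul]
      field_simp
      ring
    change ⌊(x₁ - (n • δ + u)) / δ⌋ = ⌊(x₂ - (n • δ + u)) / δ⌋ ↔ ⌊(x₁ - u) / δ⌋ = ⌊(x₂ - u) / δ⌋
    rw [key, key]
    omega
  have e1 : volume {u : ℝ | u ∈ Set.Icc 0 δ ∧ ⌊(x₁ - u) / δ⌋ = ⌊(x₂ - u) / δ⌋}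
      = volume (A ∩ Set.Ioc 0 (0 + δ)) := by
    have : {u : ℝ | u ∈ Set.Icc 0 δ ∧ ⌊(x₁ - u) / δ⌋ = ⌊(x₂ - u) / δ⌋} = A ∩ Set.Icc 0 δ := by
      ext u; simp [hA, and_comm]
    rw [this, zero_add]
    exact measure_congr ((ae_eq_refl A).inter Ioc_ae_eq_Icc.symm)
  have e2 := (isAddFundamentalDomain_Ioc hδ 0 volume).measure_set_eq
    (isAddFundamentalDomain_Ioc hδ (x₁ - δ) volume) hAm hinv
  have e3 : A ∩ Set.Ioc (x₁ - δ) (x₁ - δ + δ) = Set.Ioc (x₂ - δ) x₁ := by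
    ext u
    simp only [hA, Set.mem_inter_iff, Set.mem_setOf_eq, Set.mem_Ioc]
    have f1 : x₁ - δ < u → u ≤ x₁ → ⌊(x₁ - u) / δ⌋ = 0 := by
      intro h1 h2
      rw [Int.floor_eq_zero_iff]
      exact ⟨div_nonneg (by linarith) hδ.le, by rw [div_lt_one hδ]; linarith⟩
    constructor
    · rintro ⟨h1, h2, h3⟩
      rw [f1 h2 (by linarith), eq_comm, Int.floor_eq_zero_iff] at h1
      have := h1.2
      rw [div_lt_one hδ] at this
      exact ⟨by linarith, by linarith⟩
    · rintro ⟨h1, h2⟩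
      refine ⟨?_, by linarith, by linarith⟩
      rw [f1 (by linarith) h2, eq_comm, Int.floor_eq_zero_iff]
      exact ⟨div_nonneg (by linarith) hδ.le, by rw [div_lt_one hδ]; linarith⟩
  rw [e1, e2, e3, Real.volume_Ioc, ENNReal.toReal_ofReal']
  congr 1; ring

open MeasureTheory Filter in
lemma vol_aux_abs (x₁ x₂ δ : ℝ) (hδ : 0 < δ) :
    (volume {u : ℝ | u ∈ Set.Icc 0 δ ∧ ⌊(x₁ - u) / δ⌋ = ⌊(x₂ - u) / δ⌋}).toReal
      = max (δ - |x₁ - x₂|) 0 := by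
  rcases le_total x₁ x₂ with h | h
  · rw [vol_aux x₁ x₂ δ hδ h, abs_of_nonpos (by linarith), neg_sub]
  · rw [abs_of_nonneg (by linarith), ← vol_aux x₂ x₁ δ hδ h]
    simp only [eq_comm]



open MeasureTheory Filter in
/-- The Random Binning generating process is an unbiased estimator of the
kernel: drawing the width `δ` from the density `p(δ) = δ k''(δ)` and the bias
`u` uniformly from `[0, δ]`, the collision probability of `x₁` and `x₂`
equals `k(|x₁ − x₂|)`. -/
theorem stmt_11 (k : ℝ → ℝ)
    (hC2 : ContDiffOn ℝ 2 k (Set.Ioi 0))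
    (hconv : ∀ δ ∈ Set.Ioi (0 : ℝ), 0 ≤ deriv (deriv k) δ)
    (hk0 : Tendsto k atTop (nhds 0))
    (hk1 : Tendsto (fun δ => δ * deriv k δ) atTop (nhds 0))
    (hp : (∫ δ in Set.Ioi (0 : ℝ), δ * deriv (deriv k) δ) = 1) :
    ∀ x₁ x₂ : ℝ, x₁ ≠ x₂ →
      (∫ δ in Set.Ioi (0 : ℝ),
          (δ * deriv (deriv k) δ) * (1 / δ) *
            (MeasureTheory.volume
              {u : ℝ | u ∈ Set.Icc 0 δ ∧
                ⌊(x₁ - u) / δ⌋ = ⌊(x₂ - u) / δ⌋}).toReal) =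
        k |x₁ - x₂| := by

  intro x₁ x₂ hne
  set D := |x₁ - x₂| with hD
  have hDpos : 0 < D := abs_pos.2 (sub_ne_zero.2 hne)
  have hd1 : ∀ x ∈ Set.Ioi (0:ℝ), HasDerivAt k (deriv k x) x := fun x hx =>
    ((hC2.differentiableOn (by norm_num)).differentiableAt (Ioi_mem_nhds hx)).hasDerivAt
  have hd2 : ∀ x ∈ Set.Ioi (0:ℝ), HasDerivAt (deriv k) (deriv (deriv k) x) x := fun x hx =>
    (((hC2.deriv_of_isOpen (m := 1) isOpen_Ioi (by norm_num)).differentiableOn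
      (by norm_num)).differentiableAt (Ioi_mem_nhds hx)).hasDerivAt
  have hk' : Tendsto (deriv k) atTop (nhds 0) := by
    have := tendsto_inv_atTop_zero.mul hk1
    rw [mul_zero] at this
    refine this.congr' ?_
    filter_upwards [eventually_gt_atTop 0] with x hx
    field_simp
  have e1 : (∫ δ in Set.Ioi (0 : ℝ), (δ * deriv (deriv k) δ) * (1 / δ) *
            (volume {u : ℝ | u ∈ Set.Icc 0 δ ∧ ⌊(x₁ - u) / δ⌋ = ⌊(x₂ - u) / δ⌋}).toReal)
      = ∫ δ in Set.Ioi (0 : ℝ),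
          (Set.Ioi D).indicator (fun δ => (δ - D) * deriv (deriv k) δ) δ := by
    refine setIntegral_congr_fun measurableSet_Ioi fun δ hδ => ?_
    have hδ' : 0 < δ := hδ
    rw [vol_aux_abs x₁ x₂ δ hδ', ← hD]
    by_cases h : D < δ
    · rw [Set.indicator_of_mem (show δ ∈ Set.Ioi D from h), max_eq_left (by linarith)]
      field_simp
    · rw [Set.indicator_of_notMem (show δ ∉ Set.Ioi D from h),
        max_eq_right (by linarith [not_lt.1 h]), mul_zero]
  rw [e1, setIntegral_indicator measurableSet_Ioi, Set.inter_eq_right.2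
    (Set.Ioi_subset_Ioi hDpos.le)]
  have := integral_Ioi_of_hasDerivAt_of_nonneg' (a := D) (l := 0)
    (g := fun x => (x - D) * deriv k x - k x) (g' := fun x => (x - D) * deriv (deriv k) x)
    (fun x hx => by
      have hx0 : x ∈ Set.Ioi (0:ℝ) := lt_of_lt_of_le hDpos hx
      have := (((hasDerivAt_id x).sub_const D).mul (hd2 x hx0)).sub (hd1 x hx0)
      refine this.congr_deriv ?_
      simp only [id]; ring)
    (fun x hx => mul_nonneg (sub_nonneg.2 (le_of_lt hx)) (hconv x (hDpos.trans hx)))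
    (by
      have := (hk1.sub (hk'.const_mul D)).sub hk0
      simp only [mul_zero, sub_zero] at this
      refine this.congr fun x => by ring)
  rw [this]
  simp
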